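/- Let T be the bounded linear operator on ℓ²(ℤ, ℂ) determined on the canonical orthonormal basis (e_n)_{n∈ℤ} by T e_n = ω_n e_{n−1}, where ω_n = 2 if n ≥ 0 and ω_n = (|n|−1)/|n| if n < 0. Then T is norm-unimodal. -/

import Mathlib

open Filter Topology MeasureTheory
open scoped Classical ENNReal

noncomputable def distFreq {X : Type*} [MetricSpace X] (f : X → X) (x y : X) (τ : ℝ) (n : ℕ) : ℝ :=
  (((Finset.range n).filter fun i => dist (f^[i] x) (f^[i] y) < τ).card : ℝ) / n

def DistributionallyChaoticPair {X : Type*} [MetricSpace X] (f : X → X) (x y : X) : Prop :=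
  (∀ τ : ℝ, 0 < τ → Filter.limsup (distFreq f x y τ) Filter.atTop = 1) ∧
  (∃ ε : ℝ, 0 < ε ∧ Filter.liminf (distFreq f x y ε) Filter.atTop = 0)

def DistributionallyChaotic {X : Type*} [MetricSpace X] (f : X → X) : Prop :=
  ∃ Λ : Set X, ¬Λ.Countable ∧
    ∀ x ∈ Λ, ∀ y ∈ Λ, x ≠ y → DistributionallyChaoticPair f x y

def LiYorkePair {X : Type*} [MetricSpace X] (f : X → X) (x y : X) : Prop :=
  0 < Filter.limsup (fun n => edist (f^[n] x) (f^[n] y)) Filter.atTop ∧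
  Filter.liminf (fun n => edist (f^[n] x) (f^[n] y)) Filter.atTop = 0

def LiYorkeChaotic {X : Type*} [MetricSpace X] (f : X → X) : Prop :=
  ∃ Γ : Set X, ¬Γ.Countable ∧ ∀ x ∈ Γ, ∀ y ∈ Γ, x ≠ y → LiYorkePair f x y

def NormUnimodal {X : Type*} [NormedAddCommGroup X] [NormedSpace ℂ X] (T : X →L[ℂ] X) : Prop :=
  ∃ r : ℝ, 1 < r ∧ ∀ m : ℕ, ∃ x : X, x ≠ 0 ∧
    Filter.Tendsto (fun k => ‖(T ^ k) x‖) Filter.atTop (nhds 0) ∧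
    ∀ i : ℕ, 1 ≤ i → i ≤ m → r ^ i * ‖x‖ ≤ ‖(T ^ i) x‖

/-!
If `T` moves unit vectors `e (n + 1) ↦ w n • e n` with `1 < r ≤ ‖w n‖`, then the orbit of `e m`
grows at rate `r` until it reaches a multiple of `e 0`, after which it decays whenever the orbit of
`e 0` does. For the given shift the chain starts at the basis vector of index `-1`, which `T` kills
because the weight `(|n| - 1) / |n|` vanishes there.
-/

section WeightedShift

theorem pow_apply_add_eq_prod_smul {R M : Type*} [CommSemiring R] [TopologicalSpace M]
    [AddCommMonoid M] [Module R M] {T : M →L[R] M} {e : ℕ → M} {w : ℕ → R}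
    (hT : ∀ n, T (e (n + 1)) = w n • e n) (n i : ℕ) :
    (T ^ i) (e (n + i)) = (∏ j ∈ Finset.range i, w (n + j)) • e n := by
  induction i with
  | zero => simp
  | succ i ih =>
    rw [pow_succ, mul_apply_eq_comp, ← add_assoc, hT, map_smul, ih, smul_smul,
      Finset.prod_range_succ_comm]

variable {𝕜 X : Type*} [NormedField 𝕜] [SeminormedAddCommGroup X] [NormedSpace 𝕜 X]
  {T : X →L[𝕜] X} {e : ℕ → X} {w : ℕ → 𝕜}

theorem pow_mul_norm_le_norm_pow_apply_add {r : ℝ} (hr : 0 ≤ r)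
    (hT : ∀ n, T (e (n + 1)) = w n • e n) (hw : ∀ n, r ≤ ‖w n‖) (n i : ℕ) :
    r ^ i * ‖e n‖ ≤ ‖(T ^ i) (e (n + i))‖ := by
  have pow_le_prod : r ^ i ≤ ∏ j ∈ Finset.range i, ‖w (n + j)‖ :=
    calc
      r ^ i = ∏ _j ∈ Finset.range i, r := by rw [Finset.prod_const, Finset.card_range]
      _ ≤ ∏ j ∈ Finset.range i, ‖w (n + j)‖ :=
        Finset.prod_le_prod (fun _ _ => hr) fun j _ => hw (n + j)
  rw [pow_apply_add_eq_prod_smul hT, norm_smul, norm_prod]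
  exact mul_le_mul_of_nonneg_right pow_le_prod (norm_nonneg (e n))

theorem tendsto_norm_pow_apply_pow_apply_iff (m : ℕ) (x : X) :
    Tendsto (fun k => ‖(T ^ k) ((T ^ m) x)‖) atTop (𝓝 0) ↔
      Tendsto (fun k => ‖(T ^ k) x‖) atTop (𝓝 0) := by
  simpa only [pow_add, mul_apply_eq_comp] using
    tendsto_add_atTop_iff_nat (f := fun k => ‖(T ^ k) x‖) m

theorem tendsto_norm_pow_apply_of_index_zero (hT : ∀ n, T (e (n + 1)) = w n • e n)
    (h₀ : Tendsto (fun k => ‖(T ^ k) (e 0)‖) atTop (𝓝 0)) (m : ℕ) :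
    Tendsto (fun k => ‖(T ^ k) (e m)‖) atTop (𝓝 0) := by
  have h_pow : (T ^ m) (e m) = (∏ j ∈ Finset.range m, w j) • e 0 := by
    simpa only [zero_add] using pow_apply_add_eq_prod_smul hT 0 m
  rw [← tendsto_norm_pow_apply_pow_apply_iff m, h_pow]
  simpa only [map_smul, norm_smul, mul_zero] using h₀.const_mul ‖∏ j ∈ Finset.range m, w j‖

end WeightedShift

theorem stmt_5_general {X : Type*} [NormedAddCommGroup X] [NormedSpace ℂ X] {T : X →L[ℂ] X}
    {e : ℕ → X} {w : ℕ → ℂ} {r : ℝ} (hr : 1 < r) (he : ∀ n, ‖e n‖ = 1)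
    (hT : ∀ n, T (e (n + 1)) = w n • e n) (hw : ∀ n, r ≤ ‖w n‖)
    (h₀ : Tendsto (fun k => ‖(T ^ k) (e 0)‖) atTop (𝓝 0)) :
    NormUnimodal T := by
  refine ⟨r, hr, fun m => ⟨e m, ?_, tendsto_norm_pow_apply_of_index_zero hT h₀ m, ?_⟩⟩
  · exact norm_ne_zero_iff.mp ((he m).trans_ne one_ne_zero)
  · intro i _ hi
    obtain ⟨n, rfl⟩ := Nat.exists_eq_add_of_le' hi
    rw [he, ← he n]
    exact pow_mul_norm_le_norm_pow_apply_add (zero_le_one.trans hr.le) hT hw n i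

/-- The bilateral weighted backward shift with weights
ω_n = 2 for n ≥ 0 and ω_n = (|n|-1)/|n| for n < 0 is norm-unimodal. -/
theorem stmt_5 (T : lp (fun _ : ℤ => ℂ) 2 →L[ℂ] lp (fun _ : ℤ => ℂ) 2)
    (ω : ℤ → ℝ)
    (hω : ∀ n : ℤ, ω n = if 0 ≤ n then 2 else (((|n| : ℤ) : ℝ) - 1) / ((|n| : ℤ) : ℝ))
    (hT : ∀ n : ℤ, T (lp.single 2 n (1 : ℂ)) = ((ω n : ℝ) : ℂ) • lp.single 2 (n - 1) (1 : ℂ)) :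
    NormUnimodal T := by
  have apply_neg_one : T (lp.single 2 (-1) (1 : ℂ)) = 0 := by simp [hT, hω]
  refine stmt_5_general (e := fun n => lp.single 2 ((n : ℤ) - 1) (1 : ℂ))
    (w := fun n => (ω n : ℂ)) one_lt_two (fun n => ?_) (fun n => ?_) (fun n => ?_) ?_
  · rw [lp.norm_single two_pos, norm_one]
  · simpa only [Nat.cast_succ, add_sub_cancel_right] using hT n
  · simp [hω]
  · rw [← tendsto_norm_pow_apply_pow_apply_iff 1]
    simp [apply_neg_one]
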